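/- Let α, β, λ > 0 and let F(x) = 1 - exp(-λ·exp(exp(α x - β/x))) be the EFWE cdf. Suppose q is a real number with 1 - exp(-λ) < q < 1, and set k(q) = ln(ln(-ln(1-q)/λ)). Then the number x = (k(q) + √(k(q)² + 4αβ))/(2α) satisfies x > 0 and F(x) = q. -/

import Mathlib

/-!
Undoing the exponentials from the outside in, `F(x) = q` becomes `α x - β / x = k(q)`. For `x ≠ 0`
this is the quadratic equation `α x² - k(q) x - β = 0`, whose roots have the negative product
`-β / α`; the plus sign in the quadratic formula selects the positive one.
-/

/-- The distribution function of the EFWE distribution with parameters `α`, `β` and `lam` (the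
paper's `λ`) at a point `x > 0`; for `x ≤ 0` the formula is not the distribution function. -/
noncomputable def efweCDF (α β lam x : ℝ) : ℝ :=
  1 - Real.exp (-(lam * Real.exp (Real.exp (α * x - β / x))))

/-- The paper's `k(q)`: the value that `α * x - β / x` takes at the quantile `x` of order `q`. It is
meaningful only for `1 - exp (-lam) < q < 1`, where all three logarithms have positive arguments. -/
noncomputable def efweQuantileExponent (lam q : ℝ) : ℝ :=
  Real.log (Real.log (-Real.log (1 - q) / lam))

/-- The inverse at `k` of the bijection `x ↦ a * x - b / x` from the positive reals to the reals,
for `a` and `b` positive. -/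
noncomputable def mulSubDivInv (a b k : ℝ) : ℝ :=
  (k + √(k ^ 2 + 4 * a * b)) / (2 * a)

theorem add_sqrt_sq_add_pos (k : ℝ) {c : ℝ} (hc : 0 < c) : 0 < k + √(k ^ 2 + c) :=
  neg_lt_iff_pos_add.mp (Real.neg_sqrt_lt_of_sq_lt (lt_add_of_pos_right _ hc))

theorem mulSubDivInv_pos {a b : ℝ} (ha : 0 < a) (hb : 0 < b) (k : ℝ) : 0 < mulSubDivInv a b k :=
  div_pos (add_sqrt_sq_add_pos k (by positivity)) (by positivity)

theorem mulSubDivInv_ne_zero {a b : ℝ} (hab : 0 < a * b) (k : ℝ) : mulSubDivInv a b k ≠ 0 :=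
  div_ne_zero (add_sqrt_sq_add_pos k (by linarith)).ne'
    (mul_ne_zero two_ne_zero (left_ne_zero_of_mul hab.ne'))

theorem mul_sub_div_eq_iff_quadratic_eq_zero {K : Type*} [Field K] {a b k x : K} (hx : x ≠ 0) :
    a * x - b / x = k ↔ a * (x * x) + -k * x + -b = 0 := by
  field_simp
  constructor <;> intro h <;> linear_combination h

theorem mul_mulSubDivInv_sub_div {a b : ℝ} (hab : 0 < a * b) (k : ℝ) :
    a * mulSubDivInv a b k - b / mulSubDivInv a b k = k := by
  have discrim_eq : discrim a (-k) (-b) = √(k ^ 2 + 4 * a * b) * √(k ^ 2 + 4 * a * b) := by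
    rw [Real.mul_self_sqrt (by linarith [sq_nonneg k]), discrim]
    ring
  rw [mul_sub_div_eq_iff_quadratic_eq_zero (mulSubDivInv_ne_zero hab k),
    quadratic_eq_zero_iff (left_ne_zero_of_mul hab.ne') discrim_eq, neg_neg]
  exact Or.inl rfl

theorem exp_eq_iff_eq_log {x y : ℝ} (hy : 0 < y) : Real.exp x = y ↔ x = Real.log y := by
  rw [← Real.exp_eq_exp (y := Real.log y), Real.exp_log hy]

theorem one_lt_neg_log_one_sub_div_iff {lam q : ℝ} (hlam : 0 < lam) (hq : q < 1) :
    1 < -Real.log (1 - q) / lam ↔ 1 - Real.exp (-lam) < q := by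
  rw [one_lt_div hlam, lt_neg, Real.log_lt_iff_lt_exp (sub_pos.mpr hq), sub_lt_comm]

theorem efweCDF_eq_iff {lam q : ℝ} (hlam : 0 < lam) (hq_gt : 1 - Real.exp (-lam) < q)
    (hq_lt : q < 1) (α β x : ℝ) :
    efweCDF α β lam x = q ↔ α * x - β / x = efweQuantileExponent lam q := by
  have one_lt : 1 < -Real.log (1 - q) / lam :=
    (one_lt_neg_log_one_sub_div_iff hlam hq_lt).mpr hq_gt
  calc efweCDF α β lam x = q
      ↔ Real.exp (-(lam * Real.exp (Real.exp (α * x - β / x)))) = 1 - q := by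
        rw [efweCDF, sub_eq_iff_eq_add', ← sub_eq_iff_eq_add, eq_comm]
    _ ↔ Real.exp (Real.exp (α * x - β / x)) = -Real.log (1 - q) / lam := by
        rw [exp_eq_iff_eq_log (sub_pos.mpr hq_lt), neg_eq_iff_eq_neg, eq_div_iff hlam.ne',
          mul_comm]
    _ ↔ α * x - β / x = efweQuantileExponent lam q := by
        rw [exp_eq_iff_eq_log (one_pos.trans one_lt), exp_eq_iff_eq_log (Real.log_pos one_lt),
          efweQuantileExponent]

/-- For `1 - e^{-λ} < q < 1` and `k(q) = ln(ln(-ln(1-q)/λ))`, the number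
`x = (k(q) + √(k(q)² + 4αβ))/(2α)` is positive and satisfies `F(x) = q` for the EFWE cdf `F`. -/
theorem efwe_quantile_formula (α β lam q : ℝ) (hα : 0 < α) (hβ : 0 < β) (hlam : 0 < lam)
    (hq1 : 1 - Real.exp (-lam) < q) (hq2 : q < 1) :
    0 < (Real.log (Real.log (-Real.log (1 - q) / lam)) +
          Real.sqrt (Real.log (Real.log (-Real.log (1 - q) / lam)) ^ 2 + 4 * α * β)) / (2 * α) ∧
      1 - Real.exp (-(lam * Real.exp (Real.exp (α *
          ((Real.log (Real.log (-Real.log (1 - q) / lam)) +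
            Real.sqrt (Real.log (Real.log (-Real.log (1 - q) / lam)) ^ 2 + 4 * α * β)) / (2 * α)) -
        β / ((Real.log (Real.log (-Real.log (1 - q) / lam)) +
            Real.sqrt (Real.log (Real.log (-Real.log (1 - q) / lam)) ^ 2 + 4 * α * β)) /
          (2 * α)))))) = q := by
  change 0 < mulSubDivInv α β (efweQuantileExponent lam q) ∧
    efweCDF α β lam (mulSubDivInv α β (efweQuantileExponent lam q)) = q
  exact ⟨mulSubDivInv_pos hα hβ _,
    (efweCDF_eq_iff hlam hq1 hq2 α β _).mpr (mul_mulSubDivInv_sub_div (mul_pos hα hβ) _)⟩
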